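/- arXiv:2007.08967 — 10 statements merged into one kernel-verified Lean document; each statement's English description precedes it below -/
import Mathlib

section
/- Let G be a finite group and ψ: G → G an abelian endomorphism. Then the set N_ψ = {η_g : g ∈ G}, where η_g(h) = g ψ(g)⁻¹ h ψ(g), is a subgroup of Perm(G) which is regular and G-stable. -/
/-!
Write `g ∘ k = η_g(k) = g ψ(g)⁻¹ k ψ(g)`. Since `ψ` has abelian image it is invariant under
conjugation, so `ψ(g ∘ k) = ψ(g) ψ(k)`, and this makes `∘` associative: `η_g η_k = η_{g ∘ k}`.
As `η_g(1) = g`, the `η_g` are the left translations of a second group law on `G`, and left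
translations always form a regular group of permutations. For stability, conjugating `η_g` by
left multiplication by `x` conjugates its left factor `g ψ(g)⁻¹` by `x` and leaves `ψ(g)` alone,
and the new index again has image `ψ(g)` under `ψ`.
-/

open Equiv

/-- The permutations `f x` are the left translations of the binary operation `x ∘ y = f x y`, which
is associative with right identity `e`. As every `f x` is bijective, this is a group law on `X`;
the group itself is not bundled. -/
structure IsLeftTranslation {X : Type*} (f : X → Perm X) (e : X) : Prop where
  apply_base : ∀ x, f x e = x
  mul_eq : ∀ x y, f x * f y = f (f x y)

namespace IsLeftTranslation

variable {X : Type*} {f : X → Perm X} {e : X}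

theorem map_base (hf : IsLeftTranslation f e) : f e = 1 := by
  have h : f e * f e = f e := by rw [hf.mul_eq, hf.apply_base]
  exact mul_eq_left.mp h

theorem inv_eq (hf : IsLeftTranslation f e) (x : X) : (f x)⁻¹ = f ((f x)⁻¹ e) := by
  have apply_inv : f x ((f x)⁻¹ e) = e := (f x).apply_symm_apply e
  rw [inv_eq_iff_mul_eq_one, hf.mul_eq, apply_inv, hf.map_base]

/-- The group of all left translations, as a subgroup of the permutation group. -/
def subgroup (hf : IsLeftTranslation f e) : Subgroup (Perm X) where
  carrier := Set.range f
  one_mem' := ⟨e, hf.map_base⟩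
  mul_mem' := by
    rintro _ _ ⟨x, rfl⟩ ⟨y, rfl⟩
    exact ⟨f x y, (hf.mul_eq x y).symm⟩
  inv_mem' := by
    rintro _ ⟨x, rfl⟩
    exact ⟨(f x)⁻¹ e, (hf.inv_eq x).symm⟩

theorem existsUnique_mem_subgroup_apply_eq (hf : IsLeftTranslation f e) (x y : X) :
    ∃! π : Perm X, π ∈ hf.subgroup ∧ π x = y := by
  have inv_apply : (f x)⁻¹ x = e := Perm.inv_eq_iff_eq.mpr (hf.apply_base x).symm
  refine ⟨f y * (f x)⁻¹, ⟨mul_mem ⟨y, rfl⟩ (inv_mem ⟨x, rfl⟩), ?_⟩, ?_⟩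
  · rw [Perm.mul_apply, inv_apply, hf.apply_base]
  · rintro _ ⟨⟨z, rfl⟩, hz⟩
    rw [eq_mul_inv_iff_mul_eq, hf.mul_eq, hz]

end IsLeftTranslation

theorem map_conj_of_commute {G H : Type*} [Group G] [Group H] (φ : G →* H) {c x : G}
    (h : Commute (φ c) (φ x)) : φ (c * x * c⁻¹) = φ x := by
  rw [map_mul, map_mul, map_inv, h.mul_inv_cancel]

section AbelianMap

variable {G : Type*} [Group G] (ψ : G →* G)

/-- The permutation `η_g : h ↦ g ψ(g)⁻¹ h ψ(g)` attached to an endomorphism `ψ`, written as a left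
multiplication followed by a right multiplication so that bijectivity is built in. -/
def abelianMapPerm (g : G) : Perm G :=
  Equiv.mulRight (ψ g) * Equiv.mulLeft (g * (ψ g)⁻¹)

theorem abelianMapPerm_apply (g h : G) :
    abelianMapPerm ψ g h = g * (ψ g)⁻¹ * h * ψ g :=
  rfl

theorem abelianMapPerm_apply_one (g : G) : abelianMapPerm ψ g 1 = g := by
  rw [abelianMapPerm_apply, mul_one, inv_mul_cancel_right]

variable {ψ}

theorem map_abelianMapPerm_apply (hab : ∀ x y : G, Commute (ψ x) (ψ y)) (g k : G) :
    ψ (abelianMapPerm ψ g k) = ψ g * ψ k := by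
  have conj : ψ ((ψ g)⁻¹ * k * (ψ g)⁻¹⁻¹) = ψ k := map_conj_of_commute ψ (hab _ _)
  rw [inv_inv] at conj
  rw [abelianMapPerm_apply, mul_assoc g, mul_assoc g, map_mul, conj]

theorem abelianMapPerm_mul (hab : ∀ x y : G, Commute (ψ x) (ψ y)) (g k : G) :
    abelianMapPerm ψ g * abelianMapPerm ψ k = abelianMapPerm ψ (abelianMapPerm ψ g k) := by
  ext h
  rw [Perm.mul_apply, abelianMapPerm_apply ψ (abelianMapPerm ψ g k),
    map_abelianMapPerm_apply hab, (hab g k).eq]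
  simp only [abelianMapPerm_apply]
  group

theorem isLeftTranslation_abelianMapPerm (hab : ∀ x y : G, Commute (ψ x) (ψ y)) :
    IsLeftTranslation (abelianMapPerm ψ) 1 where
  apply_base := abelianMapPerm_apply_one ψ
  mul_eq := abelianMapPerm_mul hab

theorem mulLeft_conj_abelianMapPerm (hab : ∀ x y : G, Commute (ψ x) (ψ y)) (x g : G) :
    Equiv.mulLeft x * abelianMapPerm ψ g * (Equiv.mulLeft x)⁻¹ =
      abelianMapPerm ψ (x * (g * (ψ g)⁻¹) * x⁻¹ * ψ g) := by
  have map_index : ψ (x * (g * (ψ g)⁻¹) * x⁻¹ * ψ g) = ψ g := by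
    rw [map_mul, map_conj_of_commute ψ (hab _ _), ← map_mul, inv_mul_cancel_right]
  ext h
  rw [abelianMapPerm_apply, map_index, Perm.mul_apply, Perm.mul_apply, abelianMapPerm_apply,
    Equiv.inv_mulLeft, Equiv.coe_mulLeft, Equiv.coe_mulLeft]
  group

end AbelianMap

theorem abelian_map_regular_stable_subgroup_general {G : Type*} [Group G]
    (ψ : G →* G) (hab : ∀ x y : G, ψ x * ψ y = ψ y * ψ x)
    (η : G → Equiv.Perm G)
    (hη : ∀ g h : G, η g h = g * (ψ g)⁻¹ * h * ψ g) :
    ∃ N : Subgroup (Equiv.Perm G),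
      (N : Set (Equiv.Perm G)) = Set.range η ∧
      (∀ h k : G, ∃! π : Equiv.Perm G, π ∈ N ∧ π h = k) ∧
      (∀ g : G, ∀ π ∈ N, (Equiv.mulLeft g) * π * (Equiv.mulLeft g)⁻¹ ∈ N) := by
  obtain rfl : η = abelianMapPerm ψ := funext fun g => Equiv.ext (hη g)
  have translation := isLeftTranslation_abelianMapPerm hab
  refine ⟨translation.subgroup, rfl, translation.existsUnique_mem_subgroup_apply_eq, ?_⟩
  rintro x _ ⟨g, rfl⟩
  exact ⟨_, (mulLeft_conj_abelianMapPerm hab x g).symm⟩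

/-- Let `G` be a finite group and `ψ : G → G` an abelian endomorphism
(i.e. its image is abelian). Then the set `N_ψ = {η_g : g ∈ G}`, where
`η_g (h) = g ψ(g)⁻¹ h ψ(g)`, is a subgroup of `Perm G` which is regular and `G`-stable. -/
theorem abelian_map_regular_stable_subgroup {G : Type*} [Group G] [Finite G]
    (ψ : G →* G) (hab : ∀ x y : G, ψ x * ψ y = ψ y * ψ x)
    (η : G → Equiv.Perm G)
    (hη : ∀ g h : G, η g h = g * (ψ g)⁻¹ * h * ψ g) :
    ∃ N : Subgroup (Equiv.Perm G),
      (N : Set (Equiv.Perm G)) = Set.range η ∧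
      (∀ h k : G, ∃! π : Equiv.Perm G, π ∈ N ∧ π h = k) ∧
      (∀ g : G, ∀ π ∈ N, (Equiv.mulLeft g) * π * (Equiv.mulLeft g)⁻¹ ∈ N) :=
  abelian_map_regular_stable_subgroup_general ψ hab η hη
end

section
/- Let G be a group and ψ: G → G an abelian endomorphism. Then for all g, k ∈ G the permutations η_g satisfy the composition law η_g ∘ η_k = η_{g ψ(g)⁻¹ k ψ(g)}, and consequently the inverse of η_g is η_{ψ(g) g⁻¹ ψ(g)⁻¹}. -/
/-!
In the holomorph of `G`, `η_g ∘ η_k` is conjugation by `(ψ(k) ψ(g))⁻¹` followed by left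
multiplication by `η_g(k)`. A homomorphism with abelian image does not see conjugation, so
`ψ(η_g(k)) = ψ(k) ψ(g)` and the composite is again of the form `η_u`, with `u = η_g(k)`. The inverse
of `η_g` is therefore `η_k` for the `k` that `η_g` sends to `1`, as `η_1` is the identity.
-/

section TwistedMulLeft

variable {G : Type*} [Group G]

/-- The permutation `η_g` attached to a self-map `ψ` of a group: conjugation by `(ψ g)⁻¹` followed
by left multiplication by `g`. -/
def twistedMulLeft (ψ : G → G) (g : G) : Equiv.Perm G :=
  Equiv.mulLeft g * (MulAut.conj (ψ g)⁻¹).toEquiv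

theorem twistedMulLeft_apply (ψ : G → G) (g h : G) :
    twistedMulLeft ψ g h = g * (ψ g)⁻¹ * h * ψ g := by
  simp [twistedMulLeft, mul_assoc]

theorem twistedMulLeft_one (ψ : G →* G) : twistedMulLeft ψ 1 = 1 := by
  ext h
  simp [twistedMulLeft_apply]

theorem twistedMulLeft_mul_of_map_eq {ψ : G → G} {g k : G}
    (hψ : ψ (twistedMulLeft ψ g k) = ψ k * ψ g) :
    twistedMulLeft ψ g * twistedMulLeft ψ k = twistedMulLeft ψ (twistedMulLeft ψ g k) := by
  ext h
  rw [Equiv.Perm.mul_apply, twistedMulLeft_apply ψ (twistedMulLeft ψ g k), hψ]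
  simp only [twistedMulLeft_apply]
  group

theorem map_twistedMulLeft {ψ : G →* G} (hψ : ∀ x y, Commute (ψ x) (ψ y)) (g k : G) :
    ψ (twistedMulLeft ψ g k) = ψ k * ψ g :=
  calc
    ψ (twistedMulLeft ψ g k) = ψ g * ((ψ (ψ g))⁻¹ * ψ k * ψ (ψ g)) := by
      simp only [twistedMulLeft_apply, map_mul, map_inv, mul_assoc]
    _ = ψ g * ψ k := by rw [(hψ (ψ g) k).inv_mul_cancel]
    _ = ψ k * ψ g := hψ g k

theorem twistedMulLeft_mul {ψ : G →* G} (hψ : ∀ x y, Commute (ψ x) (ψ y)) (g k : G) :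
    twistedMulLeft ψ g * twistedMulLeft ψ k = twistedMulLeft ψ (twistedMulLeft ψ g k) :=
  twistedMulLeft_mul_of_map_eq (map_twistedMulLeft hψ g k)

theorem twistedMulLeft_apply_conj_inv (ψ : G → G) (g : G) :
    twistedMulLeft ψ g (ψ g * g⁻¹ * (ψ g)⁻¹) = 1 := by
  rw [twistedMulLeft_apply]
  group

theorem inv_twistedMulLeft {ψ : G →* G} (hψ : ∀ x y, Commute (ψ x) (ψ y)) (g : G) :
    (twistedMulLeft ψ g)⁻¹ = twistedMulLeft ψ (ψ g * g⁻¹ * (ψ g)⁻¹) := by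
  apply inv_eq_of_mul_eq_one_right
  rw [twistedMulLeft_mul hψ, twistedMulLeft_apply_conj_inv, twistedMulLeft_one]

end TwistedMulLeft

/-- Composition law for the permutations `η_g` attached to an abelian
endomorphism `ψ`: `η_g ∘ η_k = η_{g ψ(g)⁻¹ k ψ(g)}`, and consequently
`(η_g)⁻¹ = η_{ψ(g) g⁻¹ ψ(g)⁻¹}`. -/
theorem eta_comp_and_inv {G : Type*} [Group G]
    (ψ : G →* G) (hab : ∀ x y : G, ψ x * ψ y = ψ y * ψ x)
    (η : G → Equiv.Perm G)
    (hη : ∀ g h : G, η g h = g * (ψ g)⁻¹ * h * ψ g) :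
    (∀ g k : G, η g * η k = η (g * (ψ g)⁻¹ * k * ψ g)) ∧
    (∀ g : G, (η g)⁻¹ = η (ψ g * g⁻¹ * (ψ g)⁻¹)) := by
  obtain rfl : η = twistedMulLeft ψ := by
    ext g h
    rw [hη, twistedMulLeft_apply]
  refine ⟨fun g k => ?_, inv_twistedMulLeft hab⟩
  rw [twistedMulLeft_mul hab, twistedMulLeft_apply]
end

section
/- Let G be a finite group and ψ: G → G an abelian endomorphism. For g ∈ G define η'_g ∈ Perm(G) by η'_g(h) = h ψ(h)⁻¹ g ψ(h), and set N'_ψ = {η'_g : g ∈ G}. Then N'_ψ is a regular, G-stable subgroup of Perm(G), and N'_ψ equals the centralizer of N_ψ in Perm(G). -/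
/-!
An abelian endomorphism `ψ` yields an associative operation `g ∘ h = g ψ(g)⁻¹ h ψ(g)` on `G` with
the same identity. Here `η_g` is left and `η'_g` right translation by `g`, so associativity says
that the two families commute. Each family moves `1` to every point, and a permutation commuting
with a family that does so is determined by a single value. Hence the right translations exhaust
the centralizer of the left ones, and this centralizer is regular. It is `G`-stable because
conjugation by `λ(x)` turns `η'_k` into `η'_l` with `l = ψ(x) k ψ(x)⁻¹`.
-/

section Centralizer

variable {α : Type*} {S T : Set (Equiv.Perm α)} {e : α}

theorem perm_eq_of_mem_centralizer_of_apply_eq (hS : ∀ a, ∃ σ ∈ S, σ e = a)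
    {π ρ : Equiv.Perm α} (hπ : π ∈ Subgroup.centralizer S) (hρ : ρ ∈ Subgroup.centralizer S)
    {x : α} (hx : π x = ρ x) : π = ρ := by
  have comm_apply {τ σ : Equiv.Perm α} (hτ : τ ∈ Subgroup.centralizer S) (hσ : σ ∈ S) (a : α) :
      σ (τ a) = τ (σ a) := DFunLike.congr_fun (Subgroup.mem_centralizer_iff.1 hτ σ hσ) a
  have he : π e = ρ e := by
    obtain ⟨σ, hσ, rfl⟩ := hS x
    exact σ.injective (by rw [comm_apply hπ hσ, comm_apply hρ hσ, hx])
  ext a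
  obtain ⟨σ, hσ, rfl⟩ := hS a
  rw [← comm_apply hπ hσ, ← comm_apply hρ hσ, he]

theorem coe_perm_centralizer_eq_of_subset (hS : ∀ a, ∃ σ ∈ S, σ e = a)
    (hT : ∀ a, ∃ τ ∈ T, τ e = a) (hTS : T ⊆ Subgroup.centralizer S) :
    (Subgroup.centralizer S : Set (Equiv.Perm α)) = T := by
  refine Set.Subset.antisymm (fun π hπ => ?_) hTS
  obtain ⟨τ, hτ, hτe⟩ := hT (π e)
  exact perm_eq_of_mem_centralizer_of_apply_eq hS (hTS hτ) hπ hτe ▸ hτ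

theorem existsUnique_mem_perm_centralizer_apply_eq (hS : ∀ a, ∃ σ ∈ S, σ e = a)
    (hC : ∀ a, ∃ τ ∈ Subgroup.centralizer S, τ e = a) (x y : α) :
    ∃! π : Equiv.Perm α, π ∈ Subgroup.centralizer S ∧ π x = y := by
  obtain ⟨σ, hσ, rfl⟩ := hC x
  obtain ⟨τ, hτ, rfl⟩ := hC y
  refine ⟨τ * σ⁻¹, ⟨mul_mem hτ (inv_mem hσ), by simp⟩, fun π ⟨hπ, hπx⟩ => ?_⟩
  exact perm_eq_of_mem_centralizer_of_apply_eq hS hπ (mul_mem hτ (inv_mem hσ))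
    (x := σ e) (by simp [hπx])

end Centralizer

section CircleMul

variable {G : Type*} [Group G] (ψ : G →* G)

/-- The circle operation `g ∘ h = g ψ(g)⁻¹ h ψ(g)` attached to an endomorphism `ψ`: the
permutation `η_g` of the paper is `h ↦ g ∘ h`, and `η'_g` is `h ↦ h ∘ g`. -/
def circleMul (g h : G) : G :=
  g * (ψ g)⁻¹ * h * ψ g

theorem circleMul_one (g : G) : circleMul ψ g 1 = g := by
  simp [circleMul]

theorem one_circleMul (g : G) : circleMul ψ 1 g = g := by
  simp [circleMul]

theorem map_circleMul (hψ : ∀ x y : G, Commute (ψ x) (ψ y)) (g h : G) :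
    ψ (circleMul ψ g h) = ψ g * ψ h := by
  calc ψ (circleMul ψ g h)
      = ψ g * (ψ (ψ g))⁻¹ * (ψ h * ψ (ψ g)) := by
        simp only [circleMul, map_mul, map_inv, mul_assoc]
    _ = ψ g * ψ h := by
        rw [(hψ h (ψ g)).eq, mul_assoc, inv_mul_cancel_left]

theorem circleMul_assoc (hψ : ∀ x y : G, Commute (ψ x) (ψ y)) (g h k : G) :
    circleMul ψ (circleMul ψ g h) k = circleMul ψ g (circleMul ψ h k) := by
  calc circleMul ψ (circleMul ψ g h) k
      = circleMul ψ g h * (ψ h * ψ g)⁻¹ * k * (ψ h * ψ g) := by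
        rw [circleMul.eq_def ψ (circleMul ψ g h), map_circleMul ψ hψ, (hψ g h).eq]
    _ = circleMul ψ g (circleMul ψ h k) := by
        simp only [circleMul]
        group

theorem mul_circleMul_inv_mul (x h k : G) :
    x * circleMul ψ (x⁻¹ * h) k = circleMul ψ h (ψ x * k * (ψ x)⁻¹) := by
  simp only [circleMul, map_mul, map_inv]
  group

variable {ψ} {η η' : G → Equiv.Perm G}

theorem commute_of_apply_eq_circleMul (hψ : ∀ x y : G, Commute (ψ x) (ψ y))
    (hη : ∀ g h : G, η g h = circleMul ψ g h) (hη' : ∀ g h : G, η' g h = circleMul ψ h g)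
    (g k : G) : Commute (η g) (η' k) := by
  ext h
  simp only [Equiv.Perm.mul_apply, hη, hη', circleMul_assoc ψ hψ]

theorem mulLeft_conj_eq_of_apply_eq_circleMul (hη' : ∀ g h : G, η' g h = circleMul ψ h g)
    (x k : G) :
    Equiv.mulLeft x * η' k * (Equiv.mulLeft x)⁻¹ = η' (ψ x * k * (ψ x)⁻¹) := by
  ext h
  simp only [Equiv.Perm.mul_apply, Equiv.inv_mulLeft, Equiv.coe_mulLeft, hη',
    mul_circleMul_inv_mul]

end CircleMul

theorem opposite_subgroup_regular_stable_centralizer_general {G : Type*} [Group G]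
    (ψ : G →* G) (hab : ∀ x y : G, ψ x * ψ y = ψ y * ψ x)
    (η η' : G → Equiv.Perm G)
    (hη : ∀ g h : G, η g h = g * (ψ g)⁻¹ * h * ψ g)
    (hη' : ∀ g h : G, η' g h = h * (ψ h)⁻¹ * g * ψ h) :
    ∃ N' : Subgroup (Equiv.Perm G),
      (N' : Set (Equiv.Perm G)) = Set.range η' ∧
      (∀ h k : G, ∃! π : Equiv.Perm G, π ∈ N' ∧ π h = k) ∧
      (∀ g : G, ∀ π ∈ N', (Equiv.mulLeft g) * π * (Equiv.mulLeft g)⁻¹ ∈ N') ∧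
      (N' : Set (Equiv.Perm G)) = {π : Equiv.Perm G | ∀ g : G, π * η g = η g * π} := by
  have hS (a : G) : ∃ σ ∈ Set.range η, σ 1 = a :=
    ⟨η a, ⟨a, rfl⟩, (hη a 1).trans (circleMul_one ψ a)⟩
  have hT (a : G) : ∃ τ ∈ Set.range η', τ 1 = a :=
    ⟨η' a, ⟨a, rfl⟩, (hη' a 1).trans (one_circleMul ψ a)⟩
  have hTS : Set.range η' ⊆ Subgroup.centralizer (Set.range η) := by
    rintro _ ⟨k, rfl⟩ _ ⟨g, rfl⟩
    exact commute_of_apply_eq_circleMul hab hη hη' g k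
  have hrange := coe_perm_centralizer_eq_of_subset hS hT hTS
  refine ⟨Subgroup.centralizer (Set.range η), hrange, fun h k => ?_, fun g π hπ => ?_, ?_⟩
  · exact existsUnique_mem_perm_centralizer_apply_eq hS
      (fun a => (hT a).imp fun _ hτ => ⟨hTS hτ.1, hτ.2⟩) h k
  · obtain ⟨k, rfl⟩ := hrange.subset hπ
    rw [mulLeft_conj_eq_of_apply_eq_circleMul hη']
    exact hTS ⟨_, rfl⟩
  · ext π
    simp only [SetLike.mem_coe, Subgroup.mem_centralizer_iff, Set.forall_mem_range,
      Set.mem_ofPred_eq, eq_comm]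

/-- For an abelian endomorphism `ψ` of a finite group `G`, the set
`N'_ψ = {η'_g : g ∈ G}` with `η'_g (h) = h ψ(h)⁻¹ g ψ(h)` is a regular, `G`-stable
subgroup of `Perm G`, and it equals the centralizer of `N_ψ` in `Perm G`. -/
theorem opposite_subgroup_regular_stable_centralizer {G : Type*} [Group G] [Finite G]
    (ψ : G →* G) (hab : ∀ x y : G, ψ x * ψ y = ψ y * ψ x)
    (η η' : G → Equiv.Perm G)
    (hη : ∀ g h : G, η g h = g * (ψ g)⁻¹ * h * ψ g)
    (hη' : ∀ g h : G, η' g h = h * (ψ h)⁻¹ * g * ψ h) :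
    ∃ N' : Subgroup (Equiv.Perm G),
      (N' : Set (Equiv.Perm G)) = Set.range η' ∧
      (∀ h k : G, ∃! π : Equiv.Perm G, π ∈ N' ∧ π h = k) ∧
      (∀ g : G, ∀ π ∈ N', (Equiv.mulLeft g) * π * (Equiv.mulLeft g)⁻¹ ∈ N') ∧
      (N' : Set (Equiv.Perm G)) = {π : Equiv.Perm G | ∀ g : G, π * η g = η g * π} :=
  opposite_subgroup_regular_stable_centralizer_general ψ hab η η' hη hη'
end

section
/- Let G be a group with center Z(G), and let ψ₁, ψ₂: G → G be abelian endomorphisms. Then N_{ψ₁} = N_{ψ₂} (as subsets of Perm(G)) if and only if there exists a group homomorphism ζ: G → Z(G) such that ψ₁(g) = ζ(g) ψ₂(g) for all g ∈ G. -/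
/-!
Evaluating `η_g` at `1` returns `g`, so equality of the sets `N_{ψ₁}` and `N_{ψ₂}` already forces
equality of the two parametrizations. Since `η_g` is conjugation by `ψ(g)⁻¹` followed by left
translation by `g`, this means that `ψ₁(g)` and `ψ₂(g)` induce the same inner automorphism for
every `g`, that is, that `ψ₁(g) ψ₂(g)⁻¹` is central.
-/

theorem range_eq_range_iff_of_leftInverse {α β : Type*} {f₁ f₂ : α → β} {r : β → α}
    (h₁ : Function.LeftInverse r f₁) (h₂ : Function.LeftInverse r f₂) :
    Set.range f₁ = Set.range f₂ ↔ f₁ = f₂ := by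
  refine ⟨fun hrange => funext fun a => ?_, congrArg Set.range⟩
  obtain ⟨b, hb⟩ : f₁ a ∈ Set.range f₂ := hrange ▸ Set.mem_range_self a
  have hba : b = a := by rw [← h₂ b, hb, h₁ a]
  rw [← hb, hba]

section Group

variable {G : Type*} [Group G]

theorem ker_conj : (MulAut.conj : G →* MulAut G).ker = Subgroup.center G := by
  ext z
  simp only [MonoidHom.mem_ker, MulEquiv.ext_iff, MulAut.conj_apply, MulAut.one_apply,
    mul_inv_eq_iff_eq_mul, Subgroup.mem_center_iff, eq_comm (a := z * _)]

theorem conj_eq_conj_iff_div_mem_center {a b : G} :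
    MulAut.conj a = MulAut.conj b ↔ a / b ∈ Subgroup.center G := by
  rw [← ker_conj, MonoidHom.div_mem_ker_iff]

theorem exists_central_hom_iff_div_mem_center {M : Type*} [MulOneClass M] (φ₁ φ₂ : M →* G) :
    (∃ ζ : M →* G, (∀ m, ζ m ∈ Subgroup.center G) ∧ ∀ m, φ₁ m = ζ m * φ₂ m) ↔
      ∀ m, φ₁ m / φ₂ m ∈ Subgroup.center G := by
  constructor
  · rintro ⟨ζ, hζ, hφ⟩ m
    rw [hφ m, mul_div_cancel_right]
    exact hζ m
  · intro hdiv
    have div_mul (m n : M) : φ₁ (m * n) / φ₂ (m * n) = φ₁ m / φ₂ m * (φ₁ n / φ₂ n) :=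
      calc
        φ₁ (m * n) / φ₂ (m * n) = φ₁ m * (φ₁ n / φ₂ n * (φ₂ m)⁻¹) := by
          simp only [map_mul, div_eq_mul_inv, mul_inv_rev, mul_assoc]
        _ = φ₁ m * ((φ₂ m)⁻¹ * (φ₁ n / φ₂ n)) := by
          rw [Subgroup.mem_center_iff.1 (hdiv n)]
        _ = φ₁ m / φ₂ m * (φ₁ n / φ₂ n) := by
          rw [← mul_assoc, ← div_eq_mul_inv]
    let ζ : M →* G :=
      { toFun := fun m => φ₁ m / φ₂ m
        map_one' := by rw [map_one, map_one, div_one]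
        map_mul' := div_mul }
    exact ⟨ζ, hdiv, fun m => (div_mul_cancel (φ₁ m) (φ₂ m)).symm⟩

/-- The permutation `η_g : h ↦ g ψ(g)⁻¹ h ψ(g)` of `G`, so that `N_ψ` is `Set.range (eta ψ)`. -/
def eta (ψ : G → G) (g : G) : Equiv.Perm G :=
  (Equiv.mulLeft (g * (ψ g)⁻¹)).trans (Equiv.mulRight (ψ g))

theorem eta_apply (ψ : G → G) (g h : G) : eta ψ g h = g * (ψ g)⁻¹ * h * ψ g :=
  rfl

theorem eta_apply_one (ψ : G → G) (g : G) : eta ψ g 1 = g := by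
  rw [eta_apply, mul_one, inv_mul_cancel_right]

theorem eta_apply_eq_mul_conj_inv (ψ : G → G) (g h : G) :
    eta ψ g h = g * (MulAut.conj (ψ g))⁻¹ h := by
  simp only [eta_apply, MulAut.conj_inv_apply, mul_assoc]

theorem eta_eq_eta_iff_div_mem_center {ψ₁ ψ₂ : G → G} {g : G} :
    eta ψ₁ g = eta ψ₂ g ↔ ψ₁ g / ψ₂ g ∈ Subgroup.center G := by
  rw [← conj_eq_conj_iff_div_mem_center, ← inv_inj (a := MulAut.conj (ψ₁ g)), Equiv.ext_iff,
    MulEquiv.ext_iff]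
  simp only [eta_apply_eq_mul_conj_inv, mul_right_inj]

theorem range_eta_eq_iff_div_mem_center {ψ₁ ψ₂ : G → G} :
    Set.range (eta ψ₁) = Set.range (eta ψ₂) ↔ ∀ g, ψ₁ g / ψ₂ g ∈ Subgroup.center G := by
  have eval_one_leftInverse (ψ : G → G) :
      Function.LeftInverse (fun σ : Equiv.Perm G => σ 1) (eta ψ) := eta_apply_one ψ
  rw [range_eq_range_iff_of_leftInverse (eval_one_leftInverse ψ₁) (eval_one_leftInverse ψ₂),
    funext_iff]
  simp only [eta_eq_eta_iff_div_mem_center]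

theorem range_eta_eq_iff_exists_central_hom_general (ψ₁ ψ₂ : G →* G) :
    Set.range (eta ψ₁) = Set.range (eta ψ₂) ↔
      ∃ ζ : G →* G, (∀ g, ζ g ∈ Subgroup.center G) ∧ ∀ g, ψ₁ g = ζ g * ψ₂ g :=
  range_eta_eq_iff_div_mem_center.trans (exists_central_hom_iff_div_mem_center ψ₁ ψ₂).symm

end Group

/-- For abelian endomorphisms `ψ₁, ψ₂` of a group `G`,
`N_{ψ₁} = N_{ψ₂}` (as subsets of `Perm G`) iff there is a homomorphism `ζ : G → Z(G)`
with `ψ₁(g) = ζ(g) ψ₂(g)` for all `g`. -/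
theorem range_eta_eq_iff_exists_central_hom {G : Type*} [Group G]
    (ψ₁ ψ₂ : G →* G)
    (hab₁ : ∀ x y : G, ψ₁ x * ψ₁ y = ψ₁ y * ψ₁ x)
    (hab₂ : ∀ x y : G, ψ₂ x * ψ₂ y = ψ₂ y * ψ₂ x)
    (η₁ η₂ : G → Equiv.Perm G)
    (hη₁ : ∀ g h : G, η₁ g h = g * (ψ₁ g)⁻¹ * h * ψ₁ g)
    (hη₂ : ∀ g h : G, η₂ g h = g * (ψ₂ g)⁻¹ * h * ψ₂ g) :
    Set.range η₁ = Set.range η₂ ↔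
      ∃ ζ : G →* G, (∀ g : G, ζ g ∈ Subgroup.center G) ∧ ∀ g : G, ψ₁ g = ζ g * ψ₂ g := by
  obtain rfl : η₁ = eta ψ₁ := funext fun g => Equiv.ext (hη₁ g)
  obtain rfl : η₂ = eta ψ₂ := funext fun g => Equiv.ext (hη₂ g)
  exact range_eta_eq_iff_exists_central_hom_general ψ₁ ψ₂
end

section
/- Let G be a finite group, G' a normal subgroup of G, and G'' an abelian subgroup of G with G' ∩ G'' = {1} and |G'| · |G''| = |G|. Then the map ψ: G → G defined by ψ(hk) = k for h ∈ G', k ∈ G'' is a well-defined endomorphism of G with abelian image; for all h ∈ G', k ∈ G'' the permutation η_{hk} is given by η_{hk}(x) = h x k for all x ∈ G; and the subgroup N_ψ = {η_{hk} : h ∈ G', k ∈ G''} of Perm(G) is isomorphic to the direct product G' × G''. -/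
/-!
`G` is the semidirect product of the normal subgroup `G'` and its complement `G''`, so `ψ` is the
projection onto `G''`. The permutations `x ↦ h x k` with `h ∈ G'` and `k ∈ G''` are also the
`x ↦ h x k⁻¹`, and in this form they are the image of a homomorphism from `G' × G''`, injective
because `h x k⁻¹ = x` at `x = 1` forces `h = k ∈ G' ∩ G''`.
-/

section NormalComplement

variable {G : Type*} [Group G] {H K : Subgroup G}

/-- The projection of `G = H ⋊ K` onto the complement `K` of the normal subgroup `H`. -/
noncomputable def complementProj [H.Normal] (hHK : H.IsComplement' K) : G →* K :=
  SemidirectProduct.rightHom.comp (SemidirectProduct.mulEquivSubgroup hHK).symm.toMonoidHom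

theorem complementProj_mul [H.Normal] (hHK : H.IsComplement' K) (h : H) (k : K) :
    complementProj hHK (h * k) = k := by
  have hsymm : (SemidirectProduct.mulEquivSubgroup hHK).symm (h * k) = ⟨h, k⟩ := by
    rw [MulEquiv.symm_apply_eq]
    rfl
  exact congrArg SemidirectProduct.right hsymm

theorem complementProj_surjective [H.Normal] (hHK : H.IsComplement' K) :
    Function.Surjective (complementProj hHK) := fun k =>
  ⟨(1 : H) * k, complementProj_mul hHK 1 k⟩

variable (H K) in
/-- The action of `H × K` on `G` by two-sided translations `x ↦ h * x * k⁻¹`. The inverse makes it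
a homomorphism even when `K` is not commutative. -/
def twoSidedTranslation : H × K →* Equiv.Perm G where
  toFun p := (Equiv.mulLeft (p.1 : G)).trans (Equiv.mulRight (p.2 : G)⁻¹)
  map_one' := by ext; simp
  map_mul' p q := by ext; simp [mul_assoc]

theorem twoSidedTranslation_apply (h : H) (k : K) (x : G) :
    twoSidedTranslation H K (h, k) x = h * x * (k : G)⁻¹ := rfl

theorem twoSidedTranslation_injective (hdisj : Disjoint H K) :
    Function.Injective (twoSidedTranslation H K) := by
  rw [injective_iff_map_eq_one]
  rintro ⟨h, k⟩ htriv
  have heq : (h : G) = k := by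
    have hone : (h : G) * 1 * (k : G)⁻¹ = 1 := DFunLike.congr_fun htriv 1
    simpa [mul_inv_eq_one] using hone
  have hh : (h : G) = 1 := Subgroup.disjoint_def.mp hdisj h.2 (heq ▸ k.2)
  exact Prod.ext (Subtype.ext hh) (Subtype.ext (heq ▸ hh))

theorem mem_range_twoSidedTranslation {π : Equiv.Perm G} :
    π ∈ (twoSidedTranslation H K).range ↔ ∃ (h : H) (k : K), ∀ x, π x = h * x * k := by
  constructor
  · rintro ⟨⟨h, k⟩, rfl⟩
    exact ⟨h, k⁻¹, twoSidedTranslation_apply h k⟩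
  · rintro ⟨h, k, hπ⟩
    refine ⟨(h, k⁻¹), Equiv.ext fun x => ?_⟩
    simp [twoSidedTranslation_apply, hπ]

theorem mul_complementProj_inv_mul_mul_complementProj [H.Normal] (hHK : H.IsComplement' K)
    (h : H) (k : K) (x : G) :
    (h * k : G) * (complementProj hHK (h * k) : G)⁻¹ * x * complementProj hHK (h * k) =
      h * x * k := by
  rw [complementProj_mul, mul_inv_cancel_right]

theorem coe_range_twoSidedTranslation [H.Normal] (hHK : H.IsComplement' K) :
    ((twoSidedTranslation H K).range : Set (Equiv.Perm G)) =
      {π | ∃ g : G, ∀ x, π x = g * (complementProj hHK g : G)⁻¹ * x * complementProj hHK g} := by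
  ext π
  rw [SetLike.mem_coe, mem_range_twoSidedTranslation, Set.mem_ofPred_eq, hHK.surjective.exists,
    Prod.exists]
  exact exists₂_congr fun h k => forall_congr' fun x => by
    rw [← mul_complementProj_inv_mul_mul_complementProj hHK]

theorem normal_complement_abelian_map_general [H.Normal] (hHK : H.IsComplement' K) :
    ∃ ψ : G →* G,
      (∀ h ∈ H, ∀ k ∈ K, ψ (h * k) = k) ∧
      ψ.range = K ∧
      (∀ h ∈ H, ∀ k ∈ K, ∀ x : G, (h * k) * (ψ (h * k))⁻¹ * x * ψ (h * k) = h * x * k) ∧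
      ∃ N : Subgroup (Equiv.Perm G),
        ((N : Set (Equiv.Perm G)) =
          {π : Equiv.Perm G | ∃ g : G, ∀ x : G, π x = g * (ψ g)⁻¹ * x * ψ g}) ∧
        Nonempty (N ≃* H × K) := by
  refine ⟨K.subtype.comp (complementProj hHK), ?_, ?_, ?_,
    (twoSidedTranslation H K).range, coe_range_twoSidedTranslation hHK,
    ⟨(MonoidHom.ofInjective (twoSidedTranslation_injective hHK.disjoint)).symm⟩⟩
  · exact fun h hh k hk => congrArg Subtype.val (complementProj_mul hHK ⟨h, hh⟩ ⟨k, hk⟩)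
  · rw [MonoidHom.range_comp, MonoidHom.range_eq_top.mpr (complementProj_surjective hHK),
      ← MonoidHom.range_eq_map, K.range_subtype]
  · exact fun h hh k hk => mul_complementProj_inv_mul_mul_complementProj hHK ⟨h, hh⟩ ⟨k, hk⟩

end NormalComplement

/-- Let `G` be finite, `G' ◁ G`, `G'' ≤ G` abelian with
`G' ∩ G'' = 1` and `|G'|·|G''| = |G|`. Then `ψ(hk) = k` (for `h ∈ G'`, `k ∈ G''`) is a
well-defined endomorphism with abelian image, `η_{hk}(x) = h x k`, and
`N_ψ ≅ G' × G''`. -/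
theorem normal_complement_abelian_map {G : Type*} [Group G] [Finite G]
    (G' G'' : Subgroup G) (hn : G'.Normal)
    (hcomm : ∀ x y : G, x ∈ G'' → y ∈ G'' → x * y = y * x)
    (hint : G' ⊓ G'' = ⊥)
    (hcard : Nat.card G' * Nat.card G'' = Nat.card G) :
    ∃ ψ : G →* G,
      (∀ h ∈ G', ∀ k ∈ G'', ψ (h * k) = k) ∧
      (∀ x y : G, ψ x * ψ y = ψ y * ψ x) ∧
      (∀ h ∈ G', ∀ k ∈ G'', ∀ x : G,
        (h * k) * (ψ (h * k))⁻¹ * x * ψ (h * k) = h * x * k) ∧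
      ∃ N : Subgroup (Equiv.Perm G),
        ((N : Set (Equiv.Perm G)) =
          {π : Equiv.Perm G | ∃ g : G, ∀ x : G, π x = g * (ψ g)⁻¹ * x * ψ g}) ∧
        Nonempty (N ≃* G' × G'') := by
  obtain ⟨ψ, hψ, hrange, hη⟩ := normal_complement_abelian_map_general
    (Subgroup.isComplement'_of_card_mul_and_disjoint hcard (disjoint_iff.mpr hint))
  exact ⟨ψ, hψ, fun x y => hcomm _ _ (hrange.le ⟨x, rfl⟩) (hrange.le ⟨y, rfl⟩), hη⟩
end

section
/- Let G be a group and ψ: G → G an abelian endomorphism. Define a binary operation ∘ on G by g ∘ h = g ψ(g)⁻¹ h ψ(g). Then (G, ∘) is a group with the same identity element as G, the map g ↦ η_g is a group isomorphism from (G, ∘) onto N_ψ, and the skew left brace relation g ∘ (h k) = (g ∘ h) g⁻¹ (g ∘ k) holds for all g, h, k ∈ G (where juxtaposition is the original multiplication of G). -/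
/-!
The automorphisms `γ g = conj (ψ g)⁻¹` satisfy `γ (g * γ g h) = γ g * γ h`: the map `ψ`, having
abelian image, does not see conjugation, so `ψ (g * γ g h) = ψ g * ψ h`, and this product may be
inverted factor by factor. This single functional equation makes `g ∘ h = g * γ g h` a group law.
Finally `g ↦ η_g` is the left regular representation of `(G, ∘)`, so the claims on `η` and `N_ψ` are
Cayley's theorem.
-/

section TwistedMul

variable {G : Type*} [Group G]

/-- The operation `g ∘ h = g * γ g h` attached to a family `γ` of automorphisms of `G`, taken on the
underlying type of `G` so that it can be compared with the original multiplication. -/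
def twistedMul (γ : G → MulAut G) (g h : G) : G :=
  g * γ g h

theorem twistedMul_mul (γ : G → MulAut G) (g h k : G) :
    twistedMul γ g (h * k) = twistedMul γ g h * g⁻¹ * twistedMul γ g k := by
  simp only [twistedMul, map_mul, mul_assoc, inv_mul_cancel_left]

theorem twistedMul_one (γ : G → MulAut G) (g : G) : twistedMul γ g 1 = g := by
  simp only [twistedMul, map_one, mul_one]

theorem twistedMul_inv_apply_inv (γ : G → MulAut G) (g : G) :
    twistedMul γ g ((γ g)⁻¹ g⁻¹) = 1 := by
  rw [twistedMul, MulAut.apply_inv_self, mul_inv_cancel]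

/-- A gamma function on `G`: a family of automorphisms which is multiplicative from the twisted
operation to composition. In the language of skew braces it is the `λ`-map of `twistedMul γ`. -/
def IsGammaFunction (γ : G → MulAut G) : Prop :=
  ∀ g h, γ (twistedMul γ g h) = γ g * γ h

namespace IsGammaFunction

variable {γ : G → MulAut G}

theorem twistedMul_assoc (hγ : IsGammaFunction γ) (g h k : G) :
    twistedMul γ (twistedMul γ g h) k = twistedMul γ g (twistedMul γ h k) :=
  calc
    twistedMul γ (twistedMul γ g h) k = twistedMul γ g h * γ (twistedMul γ g h) k := rfl
    _ = g * γ g h * γ g (γ h k) := by rw [hγ g h, MulAut.mul_apply, twistedMul]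
    _ = g * γ g (h * γ h k) := by rw [map_mul, mul_assoc]

/-- The group `(G, ∘)` given by the twisted operation of a gamma function, as a type synonym of `G`
so that the two group structures do not clash. -/
def CircleGroup (_hγ : IsGammaFunction γ) : Type _ :=
  G

instance (hγ : IsGammaFunction γ) : Mul hγ.CircleGroup :=
  ⟨twistedMul (G := G) γ⟩

instance (hγ : IsGammaFunction γ) : One hγ.CircleGroup :=
  ⟨(1 : G)⟩

instance (hγ : IsGammaFunction γ) : Inv hγ.CircleGroup :=
  ⟨fun g : G => (γ g)⁻¹ g⁻¹⟩

instance (hγ : IsGammaFunction γ) : Group hγ.CircleGroup :=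
  Group.ofRightAxioms hγ.twistedMul_assoc (twistedMul_one γ) (twistedMul_inv_apply_inv γ)

end IsGammaFunction

end TwistedMul

section AbelianMap

variable {G : Type*} [Group G]

/-- The automorphisms `h ↦ (ψ g)⁻¹ * h * ψ g`, whose twisted operation is the one attached to the
abelian map `ψ`. -/
def conjInvMap (ψ : G →* G) (g : G) : MulAut G :=
  MulAut.conj (ψ g)⁻¹

theorem twistedMul_conjInvMap (ψ : G →* G) (g h : G) :
    twistedMul (conjInvMap ψ) g h = g * (ψ g)⁻¹ * h * ψ g := by
  simp only [twistedMul, conjInvMap, MulAut.conj_apply, inv_inv, mul_assoc]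

theorem map_twistedMul_conjInvMap {ψ : G →* G} (hψ : ∀ x y, Commute (ψ x) (ψ y)) (g h : G) :
    ψ (twistedMul (conjInvMap ψ) g h) = ψ g * ψ h :=
  calc
    ψ (twistedMul (conjInvMap ψ) g h) = ψ g * ((ψ (ψ g))⁻¹ * ψ h * ψ (ψ g)) := by
      simp only [twistedMul_conjInvMap, map_mul, map_inv, mul_assoc]
    _ = ψ g * ψ h := by rw [(hψ (ψ g) h).inv_mul_cancel]

theorem isGammaFunction_conjInvMap {ψ : G →* G} (hψ : ∀ x y, Commute (ψ x) (ψ y)) :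
    IsGammaFunction (conjInvMap ψ) := fun g h =>
  calc
    MulAut.conj (ψ (twistedMul (conjInvMap ψ) g h))⁻¹ = MulAut.conj ((ψ g)⁻¹ * (ψ h)⁻¹) := by
      rw [map_twistedMul_conjInvMap hψ, (hψ g h).mul_inv]
    _ = MulAut.conj (ψ g)⁻¹ * MulAut.conj (ψ h)⁻¹ := map_mul _ _ _

end AbelianMap

/-- For an abelian endomorphism `ψ` of a group `G`, the operation
`g ∘ h = g ψ(g)⁻¹ h ψ(g)` makes `G` a group with the same identity, `g ↦ η_g` is an
isomorphism from `(G, ∘)` onto `N_ψ`, and the skew left brace relation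
`g ∘ (h k) = (g ∘ h) g⁻¹ (g ∘ k)` holds. -/
theorem abelian_map_brace {G : Type*} [Group G]
    (ψ : G →* G) (hab : ∀ x y : G, ψ x * ψ y = ψ y * ψ x)
    (circ : G → G → G)
    (hcirc : ∀ g h : G, circ g h = g * (ψ g)⁻¹ * h * ψ g)
    (η : G → Equiv.Perm G)
    (hη : ∀ g h : G, η g h = g * (ψ g)⁻¹ * h * ψ g) :
    (∀ g h k : G, circ (circ g h) k = circ g (circ h k)) ∧
    (∀ g : G, circ 1 g = g ∧ circ g 1 = g) ∧
    (∀ g : G, ∃ g' : G, circ g g' = 1 ∧ circ g' g = 1) ∧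
    Function.Injective η ∧
    (∀ g h : G, η (circ g h) = η g * η h) ∧
    (∃ N : Subgroup (Equiv.Perm G), (N : Set (Equiv.Perm G)) = Set.range η) ∧
    (∀ g h k : G, circ g (h * k) = circ g h * g⁻¹ * circ g k) := by
  have hγ : IsGammaFunction (conjInvMap ψ) := isGammaFunction_conjInvMap hab
  let C := hγ.CircleGroup
  obtain rfl : circ = twistedMul (conjInvMap ψ) := by
    ext g h
    rw [hcirc, twistedMul_conjInvMap]
  obtain rfl : η = MulAction.toPermHom C C := by
    ext g h
    exact (hη g h).trans (twistedMul_conjInvMap ψ g h).symm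
  exact ⟨mul_assoc (G := C),
    fun g : C => ⟨one_mul g, mul_one g⟩,
    fun g : C => ⟨(g⁻¹ : C), mul_inv_cancel g, inv_mul_cancel g⟩,
    MulAction.toPerm_injective (α := C) (β := C),
    map_mul (MulAction.toPermHom C C),
    ⟨(MulAction.toPermHom C C).range, MonoidHom.coe_range _⟩,
    twistedMul_mul (conjInvMap ψ)⟩
end

section
/- Let G be a finite group, ψ: G → G an abelian endomorphism, and define g ∘ h = g ψ(g)⁻¹ h ψ(g), so that (G, ∘) is a group. Let (N, ∗) be a group and α: G → N a bijection satisfying α(g ∘ h) = α(g) ∗ α(h) for all g, h ∈ G. For g ∈ G define π_g ∈ Perm(N) by π_g(n) = α(g · α⁻¹(n)) (where · is the original multiplication of G), and set P = {π_g : g ∈ G}. Then P is a subgroup of Perm(N) which is regular and N-stable, and the map g ↦ π_g is a group isomorphism from G onto P. -/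
/-!
With `θ g h = ψ(g)⁻¹ h ψ(g)` the operation reads `g ∘ h = g · θ_g(h)`, where each `θ_g` is an
endomorphism of `(G, ·)`. So the left translation of `N` by `α g`, carried back to `G`, is the
affine map `h ↦ g · θ_g(h)`, and an affine bijection conjugates the left translation of `G` by `h`
to the left translation by `g · θ_g(h) · g⁻¹`. Hence the left regular representation of `(G, ·)`,
which is regular and stays so when carried to `N`, is normalized by the left translations of `N`.
-/

open Equiv (Perm mulLeft)

/-- A group of permutations is regular if it is simply transitive. -/
def IsRegularPermGroup {X : Type*} (P : Subgroup (Perm X)) : Prop :=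
  ∀ x y : X, ∃! σ : Perm X, σ ∈ P ∧ σ x = y

/-- `N`-stability of a group of permutations of `N`: it is normalized by the left translations
of `N`. -/
def IsLeftTranslationStable {N : Type*} [Group N] (P : Subgroup (Perm N)) : Prop :=
  ∀ m : N, ∀ σ ∈ P, mulLeft m * σ * (mulLeft m)⁻¹ ∈ P

section TransportedLeftRegular

variable {G X : Type*} [Group G]

/-- The left regular representation of `G`, carried over to a set `X` along a bijection
`α : G ≃ X`; its value at `g` is the permutation `π_g`. -/
def transportedLeftRegular (α : G ≃ X) : G →* Perm X :=
  α.permCongrHom.toMonoidHom.comp (MulAction.toPermHom G G)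

variable (α : G ≃ X)

theorem transportedLeftRegular_apply (g : G) (x : X) :
    transportedLeftRegular α g x = α (g * α.symm x) :=
  rfl

theorem transportedLeftRegular_apply_eq_iff {g : G} {x y : X} :
    transportedLeftRegular α g x = y ↔ g = α.symm y * (α.symm x)⁻¹ := by
  rw [transportedLeftRegular_apply, ← Equiv.eq_symm_apply, eq_mul_inv_iff_mul_eq]

theorem transportedLeftRegular_injective : Function.Injective (transportedLeftRegular α) :=
  α.permCongrHom.injective.comp MulAction.toPerm_injective

theorem isRegularPermGroup_range_transportedLeftRegular :
    IsRegularPermGroup (transportedLeftRegular α).range := by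
  intro x y
  refine ⟨transportedLeftRegular α (α.symm y * (α.symm x)⁻¹),
    ⟨⟨_, rfl⟩, (transportedLeftRegular_apply_eq_iff α).mpr rfl⟩, ?_⟩
  rintro _ ⟨⟨g, rfl⟩, hg⟩
  rw [(transportedLeftRegular_apply_eq_iff α).mp hg]

variable {α}

theorem conj_transportedLeftRegular_of_affine {σ : Perm X} {c : G} {θ : G →* G}
    (hσ : ∀ x : G, σ (α x) = α (c * θ x)) (g : G) :
    σ * transportedLeftRegular α g * σ⁻¹ = transportedLeftRegular α (c * θ g * c⁻¹) := by
  rw [mul_inv_eq_iff_eq_mul]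
  ext y
  obtain ⟨x, rfl⟩ := α.surjective y
  calc σ (transportedLeftRegular α g (α x))
      = σ (α (g * x)) := by rw [transportedLeftRegular_apply, α.symm_apply_apply]
    _ = α (c * θ g * c⁻¹ * (c * θ x)) := by
      rw [hσ, map_mul θ, mul_assoc (c * θ g), inv_mul_cancel_left, mul_assoc]
    _ = transportedLeftRegular α (c * θ g * c⁻¹) (σ (α x)) := by
      rw [hσ, transportedLeftRegular_apply, α.symm_apply_apply]

theorem isLeftTranslationStable_range_transportedLeftRegular {N : Type*} [Group N] {α : G ≃ N}
    {θ : G → G →* G} (hα : ∀ g h : G, α (g * θ g h) = α g * α h) :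
    IsLeftTranslationStable (transportedLeftRegular α).range := by
  rintro m _ ⟨h, rfl⟩
  obtain ⟨g, rfl⟩ := α.surjective m
  exact ⟨_, (conj_transportedLeftRegular_of_affine (fun x => (hα g x).symm) h).symm⟩

end TransportedLeftRegular

theorem transport_regular_stable_general {G N : Type*} [Group G] [Group N]
    (θ : G → G →* G) (α : G ≃ N)
    (hα : ∀ g h : G, α (g * θ g h) = α g * α h)
    (π : G → Perm N)
    (hπ : ∀ (g : G) (n : N), π g n = α (g * α.symm n)) :
    (∀ g h : G, π (g * h) = π g * π h) ∧
    Function.Injective π ∧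
    ∃ P : Subgroup (Perm N),
      (P : Set (Perm N)) = Set.range π ∧ IsRegularPermGroup P ∧ IsLeftTranslationStable P := by
  obtain rfl : π = transportedLeftRegular α := funext fun g => Equiv.ext (hπ g)
  exact ⟨map_mul _, transportedLeftRegular_injective α, (transportedLeftRegular α).range,
    MonoidHom.coe_range _, isRegularPermGroup_range_transportedLeftRegular α,
    isLeftTranslationStable_range_transportedLeftRegular hα⟩

/-- Let `ψ` be an abelian endomorphism of a finite group `G`, with
`g ∘ h = g ψ(g)⁻¹ h ψ(g)`, and let `(N, ∗)` be a group with a bijection `α : G → N`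
satisfying `α(g ∘ h) = α(g) ∗ α(h)`. Then `P = {π_g : g ∈ G}`, where
`π_g(n) = α(g · α⁻¹(n))`, is a regular, `N`-stable subgroup of `Perm N`, and
`g ↦ π_g` is an isomorphism from `G` onto `P`. -/
theorem transport_regular_stable {G N : Type*} [Group G] [Finite G] [Group N]
    (ψ : G →* G) (hab : ∀ x y : G, ψ x * ψ y = ψ y * ψ x)
    (α : G ≃ N)
    (hα : ∀ g h : G, α (g * (ψ g)⁻¹ * h * ψ g) = α g * α h)
    (π : G → Equiv.Perm N)
    (hπ : ∀ (g : G) (n : N), π g n = α (g * α.symm n)) :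
    (∀ g h : G, π (g * h) = π g * π h) ∧
    Function.Injective π ∧
    ∃ P : Subgroup (Equiv.Perm N),
      (P : Set (Equiv.Perm N)) = Set.range π ∧
      (∀ m n : N, ∃! σ : Equiv.Perm N, σ ∈ P ∧ σ m = n) ∧
      (∀ m : N, ∀ σ ∈ P, (Equiv.mulLeft m) * σ * (Equiv.mulLeft m)⁻¹ ∈ P) :=
  transport_regular_stable_general (fun g => (MulAut.conj (ψ g)⁻¹).toMonoidHom) α
    (fun g h => by simpa [mul_assoc] using hα g h) π hπ
end

section
/- Let G be a group with center Z(G) and ψ: G → G an abelian endomorphism. For g ∈ G, the permutation η_g equals a left translation λ(k) for some k ∈ G if and only if ψ(g) ∈ Z(G), in which case η_g = λ(g). In other words, N_ψ ∩ λ(G) = {λ(g) : g ∈ G, ψ(g) ∈ Z(G)}. -/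
/-!
The permutation `η_g` is the inner automorphism `conj (ψ g)⁻¹` followed by left translation by `g`.
Evaluating at `1` shows that an automorphism followed by a left translation is itself a left
translation only if the automorphism is trivial, and `conj b` is trivial exactly when `b` is
central.
-/

section

variable {G : Type*} [Group G]

theorem mulLeft_mul_toPerm_eq_mulLeft_iff {a k : G} {φ : MulAut G} :
    Equiv.mulLeft a * MulAut.toPerm G φ = Equiv.mulLeft k ↔ a = k ∧ φ = 1 := by
  constructor
  · intro h
    have apply_eq (x : G) : a * φ x = k * x := DFunLike.congr_fun h x
    obtain rfl : a = k := by simpa using apply_eq 1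
    exact ⟨rfl, MulEquiv.ext fun x => mul_left_cancel (apply_eq x)⟩
  · rintro ⟨rfl, rfl⟩
    rw [map_one, mul_one]

theorem mulAut_conj_eq_one_iff_mem_center {b : G} :
    MulAut.conj b = 1 ↔ b ∈ Subgroup.center G := by
  rw [Subgroup.mem_center_iff, MulEquiv.ext_iff]
  exact forall_congr' fun _ => mul_inv_eq_iff_eq_mul.trans eq_comm

theorem eq_mulLeft_iff_eq_and_mem_center {π : Equiv.Perm G} {a b k : G}
    (hπ : ∀ x : G, π x = a * b⁻¹ * x * b) :
    π = Equiv.mulLeft k ↔ a = k ∧ b ∈ Subgroup.center G := by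
  have factorization : π = Equiv.mulLeft a * MulAut.toPerm G (MulAut.conj b⁻¹) := by
    ext x
    change π x = a * MulAut.conj b⁻¹ x
    simp only [hπ, MulAut.conj_apply, inv_inv, mul_assoc]
  rw [factorization, mulLeft_mul_toPerm_eq_mulLeft_iff,
    mulAut_conj_eq_one_iff_mem_center, inv_mem_iff]

theorem eta_eq_mulLeft_iff_center_general (ψ : G → G) (η : G → Equiv.Perm G)
    (hη : ∀ g h : G, η g h = g * (ψ g)⁻¹ * h * ψ g) :
    (∀ g : G, (∃ k : G, η g = Equiv.mulLeft k) ↔ ψ g ∈ Subgroup.center G) ∧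
    (∀ g : G, ψ g ∈ Subgroup.center G → η g = Equiv.mulLeft g) ∧
    (Set.range η ∩ Set.range (Equiv.mulLeft : G → Equiv.Perm G) =
      {π : Equiv.Perm G | ∃ g : G, ψ g ∈ Subgroup.center G ∧ π = Equiv.mulLeft g}) := by
  have eta_eq_iff (g k : G) : η g = Equiv.mulLeft k ↔ g = k ∧ ψ g ∈ Subgroup.center G :=
    eq_mulLeft_iff_eq_and_mem_center (hη g)
  have eta_eq (g : G) (hg : ψ g ∈ Subgroup.center G) : η g = Equiv.mulLeft g :=
    (eta_eq_iff g g).2 ⟨rfl, hg⟩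
  refine ⟨fun g => ⟨fun ⟨k, hk⟩ => ((eta_eq_iff g k).1 hk).2, fun hg => ⟨g, eta_eq g hg⟩⟩,
    eta_eq, Set.Subset.antisymm ?_ ?_⟩
  · rintro _ ⟨⟨g, rfl⟩, k, hk⟩
    have hg : ψ g ∈ Subgroup.center G := ((eta_eq_iff g k).1 hk.symm).2
    exact ⟨g, hg, eta_eq g hg⟩
  · rintro _ ⟨g, hg, rfl⟩
    exact ⟨⟨g, eta_eq g hg⟩, g, rfl⟩

end

/-- For an abelian endomorphism `ψ` of a group `G`, the permutation
`η_g` is a left translation `λ(k)` for some `k` iff `ψ(g) ∈ Z(G)`, in which case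
`η_g = λ(g)`; thus `N_ψ ∩ λ(G) = {λ(g) : ψ(g) ∈ Z(G)}`. -/
theorem eta_eq_mulLeft_iff_center {G : Type*} [Group G]
    (ψ : G →* G) (hab : ∀ x y : G, ψ x * ψ y = ψ y * ψ x)
    (η : G → Equiv.Perm G)
    (hη : ∀ g h : G, η g h = g * (ψ g)⁻¹ * h * ψ g) :
    (∀ g : G, (∃ k : G, η g = Equiv.mulLeft k) ↔ ψ g ∈ Subgroup.center G) ∧
    (∀ g : G, ψ g ∈ Subgroup.center G → η g = Equiv.mulLeft g) ∧
    (Set.range η ∩ Set.range (Equiv.mulLeft : G → Equiv.Perm G) =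
      {π : Equiv.Perm G | ∃ g : G, ψ g ∈ Subgroup.center G ∧ π = Equiv.mulLeft g}) :=
  eta_eq_mulLeft_iff_center_general ψ η hη
end

section
/- Let G be a group with center Z(G) and ψ: G → G an abelian endomorphism. For g ∈ G, the permutation η_g equals a right translation (h ↦ h k for some fixed k ∈ G) if and only if g ψ(g)⁻¹ ∈ Z(G), in which case η_g(h) = h g for all h ∈ G. In other words, N_ψ ∩ ρ(G) = {h ↦ hg : g ∈ G, g ψ(g⁻¹) ∈ Z(G)}, where ρ(G) denotes the set of all right translations of G. -/
/-! Evaluating `a * h * b = h * k` at `h = 1` forces `a * b = k`; then `a * h * b = h * a * b`, and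
cancelling `b` shows that `a` is central. For `η_g` one has `a = g ψ(g)⁻¹` and `b = ψ(g)`, so the
only right translation that `η_g` can equal is the one by `a * b = g`. -/

theorem forall_mul_mul_eq_mul_iff {M : Type*} [Monoid M] {a b k : M} (hb : IsRightRegular b) :
    (∀ h, a * h * b = h * k) ↔ a ∈ Submonoid.center M ∧ a * b = k := by
  rw [Submonoid.mem_center_iff]
  constructor
  · intro translation
    have mul_eq : a * b = k := by simpa using translation 1
    refine ⟨fun h ↦ hb ?_, mul_eq⟩
    calc
      h * a * b = h * k := by rw [mul_assoc, mul_eq]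
      _ = a * h * b := (translation h).symm
  · rintro ⟨central, rfl⟩ h
    rw [← central h, mul_assoc]

section Group

variable {G : Type*} [Group G]

theorem mulLeft_mul_mulRight_eq_mulRight_iff {a b k : G} :
    Equiv.mulLeft a * Equiv.mulRight b = Equiv.mulRight k ↔
      a ∈ Subgroup.center G ∧ a * b = k := by
  simpa [Equiv.ext_iff, Submonoid.mem_center_iff, Subgroup.mem_center_iff, mul_assoc] using
    forall_mul_mul_eq_mul_iff (a := a) (k := k) (IsRightRegular.all b)

theorem eta_eq_mulRight_iff {ψ : G → G} {η : G → Equiv.Perm G}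
    (hη : ∀ g h : G, η g h = g * (ψ g)⁻¹ * h * ψ g) {g k : G} :
    η g = Equiv.mulRight k ↔ g * (ψ g)⁻¹ ∈ Subgroup.center G ∧ g = k := by
  have eta_eq : η g = Equiv.mulLeft (g * (ψ g)⁻¹) * Equiv.mulRight (ψ g) := by
    ext h
    simp [hη, mul_assoc]
  rw [eta_eq, mulLeft_mul_mulRight_eq_mulRight_iff, inv_mul_cancel_right]

theorem eta_eq_mulRight_iff_center_general (ψ : G → G) (η : G → Equiv.Perm G)
    (hη : ∀ g h : G, η g h = g * (ψ g)⁻¹ * h * ψ g) :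
    (∀ g : G, (∃ k : G, η g = Equiv.mulRight k) ↔ g * (ψ g)⁻¹ ∈ Subgroup.center G) ∧
    (∀ g : G, g * (ψ g)⁻¹ ∈ Subgroup.center G → ∀ h : G, η g h = h * g) ∧
    (Set.range η ∩ Set.range (Equiv.mulRight : G → Equiv.Perm G) =
      {π : Equiv.Perm G |
        ∃ g : G, g * (ψ g)⁻¹ ∈ Subgroup.center G ∧ π = Equiv.mulRight g}) := by
  have eta_eq {g : G} (central : g * (ψ g)⁻¹ ∈ Subgroup.center G) : η g = Equiv.mulRight g :=
    (eta_eq_mulRight_iff hη).mpr ⟨central, rfl⟩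
  refine ⟨fun g ↦ by simp [eta_eq_mulRight_iff hη], fun g central ↦ ?_, Set.Subset.antisymm ?_ ?_⟩
  · simp [eta_eq central]
  · rintro _ ⟨⟨g, rfl⟩, k, translation⟩
    have ⟨central, _⟩ := (eta_eq_mulRight_iff hη).mp translation.symm
    exact ⟨g, central, eta_eq central⟩
  · rintro _ ⟨g, central, rfl⟩
    exact ⟨⟨g, eta_eq central⟩, g, rfl⟩

end Group

/-- For an abelian endomorphism `ψ` of a group `G`, the permutation
`η_g` is a right translation `h ↦ h k` for some `k` iff `g ψ(g)⁻¹ ∈ Z(G)`, in which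
case `η_g (h) = h g`; thus `N_ψ ∩ ρ(G) = {h ↦ hg : g ψ(g⁻¹) ∈ Z(G)}`. -/
theorem eta_eq_mulRight_iff_center {G : Type*} [Group G]
    (ψ : G →* G) (hab : ∀ x y : G, ψ x * ψ y = ψ y * ψ x)
    (η : G → Equiv.Perm G)
    (hη : ∀ g h : G, η g h = g * (ψ g)⁻¹ * h * ψ g) :
    (∀ g : G, (∃ k : G, η g = Equiv.mulRight k) ↔ g * (ψ g)⁻¹ ∈ Subgroup.center G) ∧
    (∀ g : G, g * (ψ g)⁻¹ ∈ Subgroup.center G → ∀ h : G, η g h = h * g) ∧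
    (Set.range η ∩ Set.range (Equiv.mulRight : G → Equiv.Perm G) =
      {π : Equiv.Perm G |
        ∃ g : G, g * ψ (g⁻¹) ∈ Subgroup.center G ∧ π = Equiv.mulRight g}) := by
  simpa only [map_inv] using eta_eq_mulRight_iff_center_general ψ η hη
end

section
/- Let G be a finite group and ψ: G → G an abelian endomorphism. Let G₀ = ker ψ and G₁ = {g ∈ G : ψ(g) = g} (the subgroup of fixed points). Then N_ψ contains a subgroup isomorphic to the direct product G₀ × G₁; in particular, if |G₀| · |G₁| = |G|, then N_ψ is isomorphic to G₀ × G₁. -/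
/-!
For `k ∈ ker ψ` and a fixed point `f` of `ψ`, one has `ψ (k * f⁻¹) = f⁻¹`, so `η (k * f⁻¹)` is the
two-sided translation `x ↦ k * x * f⁻¹`. These translations form a homomorphic image of
`ker ψ × G₁`, and evaluating one at `1` shows that the homomorphism is injective because
`ker ψ` and `G₁` intersect trivially. If moreover `ker ψ` and `G₁` are complements, every element
of `G` has the form `k * f⁻¹`, so every `η g` is such a translation.
-/

section

open scoped Pointwise

variable {G : Type*} [Group G]

/-- The action of `G × G` on `G` by two-sided translation. The inverse on the right factor makes
this a homomorphism from `G × G` rather than from `G × Gᵐᵒᵖ`. -/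
def twoSidedMul : G × G →* Equiv.Perm G where
  toFun p := Equiv.mulLeft p.1 * Equiv.mulRight p.2⁻¹
  map_one' := by ext; simp
  map_mul' p q := by ext; simp [mul_assoc]

theorem twoSidedMul_apply (p : G × G) (x : G) : twoSidedMul p x = p.1 * x * p.2⁻¹ :=
  (mul_assoc ..).symm

theorem fst_eq_snd_of_twoSidedMul_eq_one {p : G × G} (h : twoSidedMul p = 1) : p.1 = p.2 := by
  have h_one : twoSidedMul p 1 = 1 := by rw [h, Equiv.Perm.one_apply]
  rwa [twoSidedMul_apply, mul_one, mul_inv_eq_one] at h_one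

/-- The subgroup of `Equiv.Perm G` formed by the translations `x ↦ h * x * k⁻¹` with `h ∈ H` and
`k ∈ K`; when `H` and `K` are disjoint it is a copy of `H × K`. -/
def twoSidedMulSubgroup (H K : Subgroup G) : Subgroup (Equiv.Perm G) :=
  (H.prod K).map twoSidedMul

theorem injective_twoSidedMul_domRestrict_prod {H K : Subgroup G} (hHK : Disjoint H K) :
    Function.Injective (twoSidedMul.domRestrict (H.prod K)) := by
  rw [injective_iff_map_eq_one]
  rintro ⟨⟨h, k⟩, hh, hk⟩ h_one
  obtain rfl : h = k := fst_eq_snd_of_twoSidedMul_eq_one h_one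
  obtain rfl : h = 1 := Subgroup.disjoint_def.mp hHK hh hk
  rfl

/-- The isomorphism sending the translation `x ↦ h * x * k⁻¹` to the pair `(h, k)`. -/
noncomputable def twoSidedMulSubgroupEquiv {H K : Subgroup G} (hHK : Disjoint H K) :
    twoSidedMulSubgroup H K ≃* H × K :=
  (MulEquiv.subgroupCongr (twoSidedMul.domRestrict_range (H.prod K))).symm.trans
    ((MonoidHom.ofInjective (injective_twoSidedMul_domRestrict_prod hHK)).symm.trans
      (H.prodEquiv K))

theorem disjoint_ker_of_eqOn_id {ψ : G →* G} {K : Subgroup G} (hK : Set.EqOn ψ id K) :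
    Disjoint ψ.ker K :=
  Subgroup.disjoint_def.mpr fun hx hxK => (hK hxK).symm.trans hx

/-- The permutation `η_g : x ↦ g * (ψ g)⁻¹ * x * ψ g` attached to an endomorphism `ψ`, encoded as a
two-sided translation. -/
def etaPerm (ψ : G →* G) (g : G) : Equiv.Perm G :=
  twoSidedMul (g * (ψ g)⁻¹, (ψ g)⁻¹)

theorem etaPerm_apply (ψ : G →* G) (g x : G) : etaPerm ψ g x = g * (ψ g)⁻¹ * x * ψ g := by
  rw [etaPerm, twoSidedMul_apply, inv_inv]

theorem etaPerm_mul_inv {ψ : G →* G} {k f : G} (hk : k ∈ ψ.ker) (hf : ψ f = f) :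
    etaPerm ψ (k * f⁻¹) = twoSidedMul (k, f) := by
  have hψ : ψ (k * f⁻¹) = f⁻¹ := by rw [map_mul, map_inv, MonoidHom.mem_ker.mp hk, hf, one_mul]
  rw [etaPerm, hψ, inv_inv, inv_mul_cancel_right]

theorem coe_twoSidedMulSubgroup_ker {ψ : G →* G} {K : Subgroup G} (hK : Set.EqOn ψ id K) :
    (twoSidedMulSubgroup ψ.ker K : Set (Equiv.Perm G)) =
      etaPerm ψ '' ((ψ.ker : Set G) * (K : Set G)) := by
  ext σ
  constructor
  · rintro ⟨⟨k, f⟩, ⟨hk, hf⟩, rfl⟩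
    exact ⟨k * f⁻¹, Set.mul_mem_mul hk (K.inv_mem hf), etaPerm_mul_inv hk (hK hf)⟩
  · rintro ⟨_, ⟨k, hk, f, hf, rfl⟩, rfl⟩
    have hf_inv : f⁻¹ ∈ K := K.inv_mem hf
    refine ⟨(k, f⁻¹), ⟨hk, hf_inv⟩, ?_⟩
    rw [← etaPerm_mul_inv hk (hK hf_inv), inv_inv]

theorem subgroup_iso_ker_prod_fixed_general
    (ψ : G →* G) (η : G → Equiv.Perm G)
    (hη : ∀ g h : G, η g h = g * (ψ g)⁻¹ * h * ψ g)
    (G₁ : Subgroup G) (hG₁ : (G₁ : Set G) = {g : G | ψ g = g})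
    (N : Subgroup (Equiv.Perm G)) (hN : (N : Set (Equiv.Perm G)) = Set.range η) :
    (∃ M : Subgroup (Equiv.Perm G), M ≤ N ∧ Nonempty (M ≃* ψ.ker × G₁)) ∧
    (ψ.ker.IsComplement' G₁ → Nonempty (N ≃* ψ.ker × G₁)) := by
  obtain rfl : η = etaPerm ψ := by
    ext g x
    rw [hη, etaPerm_apply]
  have hM := coe_twoSidedMulSubgroup_ker hG₁.subset
  let e := twoSidedMulSubgroupEquiv (disjoint_ker_of_eqOn_id hG₁.subset)
  refine ⟨⟨twoSidedMulSubgroup ψ.ker G₁, ?_, ⟨e⟩⟩, fun hcompl => ?_⟩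
  · rw [← SetLike.coe_subset_coe, hM, hN]
    exact Set.image_subset_range _ _
  · have hN_eq : N = twoSidedMulSubgroup ψ.ker G₁ := by
      rw [← SetLike.coe_set_eq, hM, hcompl.mul_eq, Set.image_univ, hN]
    exact ⟨(MulEquiv.subgroupCongr hN_eq).trans e⟩

end

/-- Let `ψ` be an abelian endomorphism of a finite group `G`, with
kernel `G₀ = ker ψ` and fixed-point subgroup `G₁ = {g : ψ(g) = g}`. Then `N_ψ`
contains a subgroup isomorphic to `G₀ × G₁`; in particular, if `|G₀|·|G₁| = |G|` then
`N_ψ ≅ G₀ × G₁`. -/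
theorem subgroup_iso_ker_prod_fixed {G : Type*} [Group G] [Finite G]
    (ψ : G →* G) (hab : ∀ x y : G, ψ x * ψ y = ψ y * ψ x)
    (η : G → Equiv.Perm G)
    (hη : ∀ g h : G, η g h = g * (ψ g)⁻¹ * h * ψ g)
    (G₁ : Subgroup G) (hG₁ : (G₁ : Set G) = {g : G | ψ g = g})
    (N : Subgroup (Equiv.Perm G)) (hN : (N : Set (Equiv.Perm G)) = Set.range η) :
    (∃ M : Subgroup (Equiv.Perm G), M ≤ N ∧ Nonempty (M ≃* ψ.ker × G₁)) ∧
    (Nat.card ψ.ker * Nat.card G₁ = Nat.card G → Nonempty (N ≃* ψ.ker × G₁)) :=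
  (subgroup_iso_ker_prod_fixed_general ψ η hη G₁ hG₁ N hN).imp_right fun h hcard =>
    h (Subgroup.isComplement'_of_card_mul_and_disjoint hcard (disjoint_ker_of_eqOn_id hG₁.subset))
end
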